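/- Let X be a locally compact Hausdorff space, (A, Φ) a C₀(X)-algebra, E a closed two-sided ideal of A, and x ∈ X. Then the closed linear span in A of {Φ(φ)·e : φ ∈ C₀(X), φ(x) = 0, e ∈ E} equals E ∩ J(A, Φ; x). -/

import Mathlib

open MultiplierAlgebra ZeroAtInfty

/-- For `x ∈ X`, `Jideal A Φ x` is the closed linear span in `A` of
`{Φ(φ)·a : φ ∈ C₀(X), φ(x) = 0, a ∈ A}`. -/
def Jideal {X : Type*} [TopologicalSpace X] (A : Type*) [NonUnitalCStarAlgebra A]
    (Φ : C₀(X, ℂ) →⋆ₙₐ[ℂ] 𝓜(ℂ, A)) (x : X) : Set A :=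
  closure (Submodule.span ℂ
    {a : A | ∃ φ : C₀(X, ℂ), φ x = 0 ∧ ∃ b : A, a = (Φ φ).fst b} : Set A)

lemma approx_left {A : Type*} [NonUnitalCStarAlgebra A] (a : A) (d : ℝ) (hd : 0 < d) :
    ∃ w : A, ‖a - (a * star a * w) * a‖ ^ 2 ≤ d := by
  set h : A := a * star a with hh
  have hsa : IsSelfAdjoint h := IsSelfAdjoint.mul_star_self a
  let g : ℝ → ℝ := fun t => t / (t ^ 2 + d ^ 2)
  have hpos : ∀ t : ℝ, 0 < t ^ 2 + d ^ 2 := fun t => by positivity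
  have hg : Continuous g := by
    refine Continuous.div (by fun_prop) (by fun_prop) (fun t => (hpos t).ne')
  have hg0 : g 0 = 0 := by simp [g]
  let f : ℝ → ℝ := fun t => t * g t
  have hf : Continuous f := continuous_id.mul hg
  have hf0 : f 0 = 0 := by simp [f]
  refine ⟨cfcₙ g h, ?_⟩
  have hid : cfcₙ (fun t : ℝ => t) h = h := cfcₙ_id' ℝ h
  have hv : h * cfcₙ g h = cfcₙ f h := by
    have := cfcₙ_mul (fun t : ℝ => t) g h (by fun_prop) rfl hg.continuousOn hg0
    rw [hid] at this
    exact this.symm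
  rw [hv]
  have hvs : star (cfcₙ f h) = cfcₙ f h := (cfcₙ_predicate f h : IsSelfAdjoint _).star_eq
  have h1 : cfcₙ (fun t : ℝ => f t * t) h = cfcₙ f h * h := by
    rw [cfcₙ_mul f (fun t : ℝ => t) h hf.continuousOn hf0 (by fun_prop) rfl, hid]
  have h2 : cfcₙ (fun t : ℝ => t - f t * t) h = h - cfcₙ f h * h := by
    rw [cfcₙ_sub (fun t : ℝ => t) (fun t => f t * t) h (by fun_prop) rfl
      (by fun_prop) (by simp), hid, h1]
  have h3 : cfcₙ (fun t : ℝ => (t - f t * t) - (t - f t * t) * f t) h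
      = (h - cfcₙ f h * h) - (h - cfcₙ f h * h) * cfcₙ f h := by
    rw [cfcₙ_sub (fun t : ℝ => t - f t * t) (fun t => (t - f t * t) * f t) h (by fun_prop)
      (by simp) (by fun_prop) (by simp),
      cfcₙ_mul (fun t : ℝ => t - f t * t) f h (by fun_prop) (by simp) (by fun_prop) hf0, h2]
  have h4 : (a - cfcₙ f h * a) * star (a - cfcₙ f h * a)
      = cfcₙ (fun t : ℝ => (t - f t * t) - (t - f t * t) * f t) h := by
    rw [h3, star_sub, star_mul, hvs]
    generalize cfcₙ f h = v
    rw [hh]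
    noncomm_ring
  rw [sq, ← CStarRing.norm_self_mul_star, h4]
  refine norm_cfcₙ_le (fun t _ => ?_)
  have e : (t - f t * t) - (t - f t * t) * f t = t * (d ^ 2 / (t ^ 2 + d ^ 2)) ^ 2 := by
    have := (hpos t).ne'
    simp only [f, g]
    field_simp
    ring
  rw [e, Real.norm_eq_abs, abs_mul, abs_of_nonneg (sq_nonneg (d ^ 2 / (t ^ 2 + d ^ 2))), div_pow,
    ← mul_div_assoc, div_le_iff₀ (by positivity)]
  have ht := abs_nonneg t
  rw [← sq_abs t]
  generalize |t| = r at *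
  have k1 : r * d ≤ r ^ 2 + d ^ 2 := by nlinarith [sq_nonneg (r - d)]
  have k2 : d ^ 2 ≤ r ^ 2 + d ^ 2 := by nlinarith
  have k3 : (r * d) * d ^ 2 ≤ (r ^ 2 + d ^ 2) * (r ^ 2 + d ^ 2) :=
    mul_le_mul k1 k2 (by positivity) (by positivity)
  nlinarith [mul_le_mul_of_nonneg_left k3 hd.le]

lemma mem_closure_mul {A : Type*} [NonUnitalCStarAlgebra A] (E : TwoSidedIdeal A) (a : A)
    (ha : a ∈ E) : a ∈ closure {b : A | ∃ v ∈ E, b = v * a} := by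
  rw [Metric.mem_closure_iff]
  intro ε hε
  obtain ⟨w, hw⟩ := approx_left a (ε ^ 2 / 2) (by positivity)
  refine ⟨_, ⟨a * star a * w, E.mul_mem_right _ _ (E.mul_mem_right _ _ ha), rfl⟩, ?_⟩
  rw [dist_eq_norm]
  refine lt_of_pow_lt_pow_left₀ 2 hε.le (hw.trans_lt ?_)
  have : 0 < ε ^ 2 := by positivity
  linarith

/-- A continuous linear map that is a left multiplier preserves closed ideals. -/
lemma map_mem_ideal {A : Type*} [NonUnitalCStarAlgebra A] (E : TwoSidedIdeal A)
    (hE : IsClosed (E : Set A)) (L : A →L[ℂ] A) (hL : ∀ a b, L (a * b) = L a * b)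
    (e : A) (he : e ∈ E) : L e ∈ E := by
  have h := map_mem_closure (t := (E : Set A)) L.continuous (mem_closure_mul E e he) (by
    rintro _ ⟨v, hv, rfl⟩
    rw [hL]
    exact E.mul_mem_left _ _ he)
  rwa [hE.closure_eq] at h

/-- Let `X` be a locally compact Hausdorff space, `(A, Φ)` a `C₀(X)`-algebra,
`E` a closed two-sided ideal of `A`, and `x ∈ X`.  Then the closed linear span in `A` of
`{Φ(φ)·e : φ ∈ C₀(X), φ(x) = 0, e ∈ E}` equals `E ∩ J(A, Φ; x)`. -/
theorem stmt4 {X : Type*} [TopologicalSpace X] [LocallyCompactSpace X] [T2Space X]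
    {A : Type*} [NonUnitalCStarAlgebra A]
    (Φ : C₀(X, ℂ) →⋆ₙₐ[ℂ] 𝓜(ℂ, A))
    (hΦ_central : ∀ φ : C₀(X, ℂ), Φ φ ∈ Set.center 𝓜(ℂ, A))
    (hΦ_nondeg : closure (Submodule.span ℂ
      {a : A | ∃ (φ : C₀(X, ℂ)) (b : A), a = (Φ φ).fst b} : Set A) = Set.univ)
    (E : TwoSidedIdeal A) (hE_closed : IsClosed (E : Set A)) (x : X) :
    closure (Submodule.span ℂ
      {a : A | ∃ φ : C₀(X, ℂ), φ x = 0 ∧ ∃ e : A, e ∈ E ∧ a = (Φ φ).fst e} : Set A) =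
      (E : Set A) ∩ Jideal A Φ x := by
  have hmul : ∀ (φ : C₀(X, ℂ)) (v b : A), (Φ φ).fst (v * b) = v * (Φ φ).fst b := by
    intro φ v b
    have h := ((Set.mem_center_iff.mp (hΦ_central φ)).comm (v : 𝓜(ℂ, A)))
    have h' := congrArg (fun m : 𝓜(ℂ, A) => m.fst b) h
    simpa using h'
  have hmulr : ∀ (φ : C₀(X, ℂ)) (v b : A), (Φ φ).fst (v * b) = (Φ φ).fst v * b := by
    intro φ v b
    have key : ∀ z : A, z * (Φ φ).fst (v * b) = z * ((Φ φ).fst v * b) := by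
      intro z
      rw [← (Φ φ).central, ← mul_assoc, ← mul_assoc, (Φ φ).central]
    have h0 : ∀ y : A, (∀ z, z * y = 0) → y = 0 := by
      intro y hy
      exact (CStarRing.star_mul_self_eq_zero_iff y).mp (hy _)
    rw [← sub_eq_zero]
    apply h0
    intro z
    rw [mul_sub, key, sub_self]
  apply Set.Subset.antisymm
  · apply Set.subset_inter
    · apply closure_minimal _ hE_closed
      let S : Submodule ℂ A :=
        { carrier := E
          add_mem' := fun h1 h2 => E.add_mem h1 h2
          zero_mem' := E.zero_mem
          smul_mem' := fun c e he => map_mem_ideal E hE_closed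
            (c • ContinuousLinearMap.id ℂ A) (fun a b => by simp [smul_mul_assoc]) e he }
      refine (Submodule.span_le (p := S)).mpr ?_
      rintro _ ⟨φ, -, e, he, rfl⟩
      exact map_mem_ideal E hE_closed _ (hmulr φ) e he
    · apply closure_mono
      apply Submodule.span_mono
      rintro _ ⟨φ, hφ, e, -, rfl⟩
      exact ⟨φ, hφ, e, rfl⟩
  · rintro a ⟨haE, haJ⟩
    have h := mem_closure_mul E a haE
    refine closure_minimal ?_ isClosed_closure h
    rintro _ ⟨v, hv, rfl⟩
    refine map_mem_closure (f := fun y => v * y) (by fun_prop) haJ ?_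
    intro y hy
    induction hy using Submodule.span_induction with
    | mem y hy =>
      obtain ⟨φ, hφ, b, rfl⟩ := hy
      exact Submodule.subset_span ⟨φ, hφ, v * b, E.mul_mem_right _ _ hv, (hmul φ v b).symm⟩
    | zero => simp
    | add y z _ _ h1 h2 =>
      simp only [mul_add]
      exact Submodule.add_mem _ h1 h2
    | smul c y _ h1 =>
      simp only [mul_smul_comm]
      exact Submodule.smul_mem _ c h1
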